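/- Let b = (b₁,…,b₆) ∈ ℤ⁶ satisfy b₁, b₂, b₅, b₆ ≥ 2, b₁ < b₂, b₅ < b₆ and b₄ ≤ b₃, and suppose that M(b) is positive definite with det M(b) = 1. Then b₄ = 1, 2 ≤ b₃ ≤ 7, b₁ ≤ 23, b₂ ≤ 133, b₅ ≤ 13 and b₆ ≤ 97. -/

import Mathlib

/-- The linking matrix of the `H`-graph. -/
def Mb (b : Fin 6 → ℤ) : Matrix (Fin 6) (Fin 6) ℤ :=
  !![b 0,    0,   -1,    0,    0,    0;
        0, b 1,   -1,    0,    0,    0;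
       -1,   -1, b 2,   -1,    0,    0;
        0,    0,   -1, b 3,   -1,   -1;
        0,    0,    0,   -1, b 4,    0;
        0,    0,    0,   -1,    0, b 5]

/-!
Write `P` and `Q` for the determinants of the two stars of the `H`-graph, with centre and leaf
weights `(c; a, b)` and `(d; e, f)`. They are principal minors, hence positive, and `det M = 1`
becomes `P * Q = a * b * (e * f) + 1`. So the product of `P / (a * b) = c - 1 / a - 1 / b` and
`Q / (e * f) = d - 1 / e - 1 / f` is only slightly larger than `1`, which bounds the centres and
the smaller leaf of each star. Expanding along a larger leaf, say `b`, gives `b * δ = a * Q + 1`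
with `δ` the positive minor obtained by deleting it; once `c`, `e` and `a` are fixed, a large `b`
is then a system of linear inequalities in `f` without integer solution.
-/

/-- The determinant of the linking matrix of a star with centre of weight `c` and two leaves of
weights `x` and `y`; the `H`-graph consists of two such stars with their centres joined. -/
def starDet (c x y : ℤ) : ℤ :=
  x * y * c - x - y

theorem det_submatrix_pos {m n : Type*} [Fintype m] [DecidableEq m] {M : Matrix n n ℤ}
    (hM : (M.map ((↑·) : ℤ → ℝ)).PosDef) {i : m → n} (hi : Function.Injective i) :
    0 < (M.submatrix i i).det := by
  have hpos : 0 < ((M.submatrix i i).map (Int.castRingHom ℝ)).det := (hM.submatrix hi).det_pos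
  rw [← RingHom.mapMatrix_apply, ← RingHom.map_det] at hpos
  exact Int.cast_pos.mp hpos

theorem det_Mb (b : Fin 6 → ℤ) :
    (Mb b).det =
      starDet (b 2) (b 0) (b 1) * starDet (b 3) (b 4) (b 5) - b 0 * b 1 * (b 4 * b 5) := by
  simp [Mb, starDet, Matrix.det_succ_row_zero, Fin.sum_univ_succ, Fin.succAbove]
  ring

theorem det_Mb_left_star (b : Fin 6 → ℤ) :
    ((Mb b).submatrix ![0, 1, 2] ![0, 1, 2]).det = starDet (b 2) (b 0) (b 1) := by
  rw [Matrix.det_fin_three]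
  simp [Mb, starDet]

theorem det_Mb_right_star (b : Fin 6 → ℤ) :
    ((Mb b).submatrix ![3, 4, 5] ![3, 4, 5]).det = starDet (b 3) (b 4) (b 5) := by
  rw [Matrix.det_fin_three]
  simp [Mb, starDet]
  ring

section StarInequalities

variable {a b c m : ℤ}

-- That is, `1 / a + 1 / b ≤ 1 / m + 1 / (m + 1)`.
theorem mul_succ_mul_add_le_mul (hm : 0 ≤ m) (ha : m ≤ a) (hab : a < b) :
    m * (m + 1) * (a + b) ≤ (2 * m + 1) * (a * b) := by
  have ha_gap : 0 ≤ (m + 1) * b * (a - m) :=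
    mul_nonneg (mul_nonneg (by lia) (by lia)) (by lia)
  have hb_gap : 0 ≤ m * a * (b - (m + 1)) :=
    mul_nonneg (mul_nonneg hm (by lia)) (by lia)
  linarith

theorem mul_leaves_le_mul_starDet (hm : 0 ≤ m) (ha : m ≤ a) (hab : a < b) :
    (m * (m + 1) * c - (2 * m + 1)) * (a * b) ≤ m * (m + 1) * starDet c a b := by
  rw [starDet]
  linarith [mul_succ_mul_add_le_mul hm ha hab]

theorem mul_succ_le_mul (hm : 0 ≤ m) (ha : m ≤ a) (hab : a < b) : m * (m + 1) ≤ a * b :=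
  mul_le_mul ha (by lia) (by lia) (by lia)

end StarInequalities

section Unimodular

variable {a b c d e f : ℤ}

theorem mul_starDet_le_mul_leaves {m : ℤ} (hm : 0 < m) (ha : m ≤ a) (hab : a < b)
    (hQ : 0 ≤ starDet d e f)
    (hdet : starDet c a b * starDet d e f - a * b * (e * f) = 1) :
    (m * (m + 1) * c - (2 * m + 1)) * starDet d e f ≤ m * (m + 1) * (e * f) + 1 := by
  have hab_pos : 0 < a * b := mul_pos (by lia) (by lia)
  have hP := mul_le_mul_of_nonneg_right (mul_leaves_le_mul_starDet (c := c) hm.le ha hab) hQ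
  refine sub_le_iff_le_add'.mp (le_of_mul_le_mul_left ?_ hab_pos)
  calc a * b * ((m * (m + 1) * c - (2 * m + 1)) * starDet d e f - m * (m + 1) * (e * f))
      ≤ m * (m + 1) * (starDet c a b * starDet d e f - a * b * (e * f)) := by linarith
    _ = m * (m + 1) := by rw [hdet, mul_one]
    _ ≤ a * b * 1 := by linarith [mul_succ_le_mul hm.le ha hab]

theorem mul_leaves_lt_mul_starDet (ha : 0 < a) (hb : 0 < b) (hQ : 0 < starDet d e f)
    (hdet : starDet c a b * starDet d e f - a * b * (e * f) = 1) :
    e * f < c * starDet d e f := by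
  have hP : starDet c a b < a * b * c := by rw [starDet]; lia
  refine lt_of_mul_lt_mul_left ?_ (mul_pos ha hb).le
  linarith [mul_lt_mul_of_pos_right hP hQ]

theorem center_pos_of_starDet_nonneg (he : 0 < e) (hf : 0 < f) (hQ : 0 ≤ starDet d e f) :
    0 < d := by
  rw [starDet] at hQ
  exact pos_of_mul_pos_right (by linarith : 0 < e * f * d) (mul_pos he hf).le

theorem right_center_eq_one (ha : 2 ≤ a) (hab : a < b) (he : 2 ≤ e) (hef : e < f) (hdc : d ≤ c)
    (hQ : 0 ≤ starDet d e f)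
    (hdet : starDet c a b * starDet d e f - a * b * (e * f) = 1) : d = 1 := by
  have hd : 0 < d := center_pos_of_starDet_nonneg (by lia) (by lia) hQ
  by_contra hd_ne
  have hd_two : 2 ≤ d := by lia
  have hc_two : 2 ≤ c := hd_two.trans hdc
  have hef_le := mul_succ_le_mul zero_le_two he hef
  have hupper : 7 * starDet d e f ≤ 6 * (e * f) + 1 := by
    linarith [mul_starDet_le_mul_leaves two_pos ha hab hQ hdet,
      mul_le_mul_of_nonneg_right hc_two hQ]
  have hlower : 7 * (e * f) ≤ 6 * starDet d e f := by
    have hef_nonneg : 0 ≤ e * f := mul_nonneg (by lia) (by lia)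
    linarith [mul_leaves_le_mul_starDet (c := d) zero_le_two he hef,
      mul_le_mul_of_nonneg_right hd_two hef_nonneg]
  lia

theorem two_le_left_center (ha : 0 < a) (hb : 0 < b) (he : 0 < e) (hf : 0 < f)
    (hQ : 0 < starDet 1 e f)
    (hdet : starDet c a b * starDet 1 e f - a * b * (e * f) = 1) : 2 ≤ c := by
  have hlt := mul_leaves_lt_mul_starDet ha hb hQ hdet
  have hQ_lt : starDet 1 e f < e * f := by rw [starDet]; lia
  by_contra! hc
  have hc_one : c ≤ 1 := Int.le_of_lt_add_one hc
  linarith [mul_le_mul_of_nonneg_right hc_one hQ.le]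

theorem left_center_le_7 (ha : 2 ≤ a) (hab : a < b) (he : 2 ≤ e) (hef : e < f)
    (hQ : 0 ≤ starDet 1 e f)
    (hdet : starDet c a b * starDet 1 e f - a * b * (e * f) = 1) : c ≤ 7 := by
  by_contra! hc
  have hef_le := mul_succ_le_mul zero_le_two he hef
  have hupper : 43 * starDet 1 e f ≤ 6 * (e * f) + 1 := by
    linarith [mul_starDet_le_mul_leaves two_pos ha hab hQ hdet,
      mul_le_mul_of_nonneg_right (Int.add_one_le_of_lt hc) hQ]
  have hlower := mul_leaves_le_mul_starDet (c := 1) (by lia) he hef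
  lia

theorem right_min_leaf_le_13 (hc : 2 ≤ c) (ha : 2 ≤ a) (hab : a < b) (hef : e < f)
    (hQ : 0 ≤ starDet 1 e f)
    (hdet : starDet c a b * starDet 1 e f - a * b * (e * f) = 1) : e ≤ 13 := by
  by_contra! he
  have hef_le := mul_succ_le_mul (by lia) (Int.add_one_le_of_lt he) hef
  have hupper : 7 * starDet 1 e f ≤ 6 * (e * f) + 1 := by
    linarith [mul_starDet_le_mul_leaves two_pos ha hab hQ hdet,
      mul_le_mul_of_nonneg_right hc hQ]
  have hlower := mul_leaves_le_mul_starDet (c := 1) (by lia) (Int.add_one_le_of_lt he) hef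
  lia

-- If `24 ≤ a`, then `1 - 1 / e - 1 / f` exceeds `1 / c`, but by too little for integers `e < f`.
theorem left_min_leaf_le_23 (hc : 2 ≤ c) (hc_le : c ≤ 7) (he : 2 ≤ e) (he_le : e ≤ 13)
    (hab : a < b) (hef : e < f) (hQ : 0 < starDet 1 e f)
    (hdet : starDet c a b * starDet 1 e f - a * b * (e * f) = 1) : a ≤ 23 := by
  by_contra! ha
  have hupper := mul_starDet_le_mul_leaves (by lia) (Int.add_one_le_of_lt ha) hab hQ.le hdet
  have hlower := mul_leaves_lt_mul_starDet (by lia) (by lia) hQ hdet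
  simp only [starDet] at hupper hlower
  clear hQ hdet
  interval_cases c <;> interval_cases e <;> lia

/-- The determinant of the linking matrix of the `H`-graph with stars `(c; a, b)` and `(d; e, f)`
after deleting the leaf of weight `b`, that is, the cofactor of `b`. -/
def leafMinor (a c d e f : ℤ) : ℤ :=
  (a * c - 1) * starDet d e f - a * (e * f)

theorem mul_leafMinor (hdet : starDet c a b * starDet d e f - a * b * (e * f) = 1) :
    b * leafMinor a c d e f = a * starDet d e f + 1 := by
  simp only [leafMinor, starDet] at hdet ⊢
  linear_combination hdet

theorem leafMinor_pos (ha : 0 ≤ a) (hb : 0 ≤ b) (hQ : 0 ≤ starDet d e f)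
    (hdet : starDet c a b * starDet d e f - a * b * (e * f) = 1) :
    0 < leafMinor a c d e f := by
  have hexp := mul_leafMinor hdet
  exact pos_of_mul_pos_right (by rw [hexp]; positivity) hb

theorem mul_leafMinor_le {k : ℤ} (ha : 0 ≤ a) (hb : 0 ≤ b) (hk : k ≤ b)
    (hQ : 0 ≤ starDet d e f)
    (hdet : starDet c a b * starDet d e f - a * b * (e * f) = 1) :
    k * leafMinor a c d e f ≤ a * starDet d e f + 1 :=
  mul_leafMinor hdet ▸ mul_le_mul_of_nonneg_right hk (leafMinor_pos ha hb hQ hdet).le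

theorem left_max_leaf_le_133 (hc : 2 ≤ c) (hc_le : c ≤ 7) (ha : 2 ≤ a) (ha_le : a ≤ 23)
    (he : 2 ≤ e) (he_le : e ≤ 13) (hab : a < b) (hef : e < f) (hQ : 0 ≤ starDet 1 e f)
    (hdet : starDet c a b * starDet 1 e f - a * b * (e * f) = 1) : b ≤ 133 := by
  by_contra! hb
  have hpos := leafMinor_pos (by lia) (by lia) hQ hdet
  have hle := mul_leafMinor_le (by lia) (by lia) (Int.add_one_le_of_lt hb) hQ hdet
  have hupper := mul_starDet_le_mul_leaves two_pos ha hab hQ hdet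
  simp only [leafMinor, starDet] at hpos hle hupper
  clear hQ hdet hab hb
  -- `hupper` excludes most pairs `(c, e)` whatever `a` is.
  interval_cases c <;> interval_cases e <;> try lia
  all_goals interval_cases a <;> lia

theorem right_max_leaf_le_97 (hc : 2 ≤ c) (hc_le : c ≤ 7) (ha : 2 ≤ a) (ha_le : a ≤ 23)
    (he : 2 ≤ e) (he_le : e ≤ 13) (hab : a < b) (hef : e < f) (hP : 0 ≤ starDet c a b)
    (hQ : 0 ≤ starDet 1 e f)
    (hdet : starDet c a b * starDet 1 e f - a * b * (e * f) = 1) : f ≤ 97 := by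
  by_contra! hf
  have hdet_symm : starDet 1 e f * starDet c a b - e * f * (a * b) = 1 := by linarith
  have hpos := leafMinor_pos (by lia) (by lia) hP hdet_symm
  have hle := mul_leafMinor_le (by lia) (by lia) (Int.add_one_le_of_lt hf) hP hdet_symm
  have hupper := mul_starDet_le_mul_leaves two_pos ha hab hQ hdet
  simp only [leafMinor, starDet] at hpos hle hupper
  clear hP hQ hdet hdet_symm
  -- `hupper` excludes most pairs `(c, e)` whatever `a` is.
  interval_cases c <;> interval_cases e <;> try lia
  all_goals interval_cases a <;> lia

end Unimodular

theorem hgraph_bounds (b : Fin 6 → ℤ)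
    (h1 : 2 ≤ b 0) (h2 : 2 ≤ b 1) (h5 : 2 ≤ b 4) (h6 : 2 ≤ b 5)
    (h12 : b 0 < b 1) (h56 : b 4 < b 5) (h43 : b 3 ≤ b 2)
    (hpos : ((Mb b).map ((↑·) : ℤ → ℝ)).PosDef)
    (hdet : (Mb b).det = 1) :
    b 3 = 1 ∧ 2 ≤ b 2 ∧ b 2 ≤ 7 ∧ b 0 ≤ 23 ∧ b 1 ≤ 133 ∧ b 4 ≤ 13 ∧ b 5 ≤ 97 := by
  have hP : 0 < starDet (b 2) (b 0) (b 1) :=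
    det_Mb_left_star b ▸ det_submatrix_pos hpos (by decide)
  have hQ : 0 < starDet (b 3) (b 4) (b 5) :=
    det_Mb_right_star b ▸ det_submatrix_pos hpos (by decide)
  rw [det_Mb] at hdet
  have hd := right_center_eq_one h1 h12 h5 h56 h43 hQ.le hdet
  rw [hd] at hQ hdet
  have hc := two_le_left_center (by lia) (by lia) (by lia) (by lia) hQ hdet
  have hc_le := left_center_le_7 h1 h12 h5 h56 hQ.le hdet
  have he := right_min_leaf_le_13 hc h1 h12 h56 hQ.le hdet
  have ha := left_min_leaf_le_23 hc hc_le h5 he h12 h56 hQ hdet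
  have hb := left_max_leaf_le_133 hc hc_le h1 ha h5 he h12 h56 hQ.le hdet
  have hf := right_max_leaf_le_97 hc hc_le h1 ha h5 he h12 h56 hP.le hQ.le hdet
  exact ⟨hd, hc, hc_le, ha, hb, he, hf⟩
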